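/- arXiv:1508.04192 — 3 statements merged into one kernel-verified Lean document; each statement's English description precedes it below -/
import Mathlib

section
/- Under the Weierstrass setting, assume that I_s + J₁ is invertible (equivalently, −1 is not an eigenvalue of the pencil inside Γ) and that rank(U) = s. Then rank((A·U + B·U)*·(T^{-1})_{(:,1:s)}) = s and rank((S^{-1})_{(1:s,:)}·U) = s. -/
open Matrix

/-!
Write `X` for the first `s` columns of `S`, `L` for the first `s` rows of `S⁻¹` and `Z` for the
first `s` columns of `T⁻¹`. The block form of the pencil gives `A X = Z J₁` and `B X = Z`, and every
block of `U` has a left factor `X`, so `U = X W`. Hence `L U = W`, which has the rank of `U` because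
`L X = 1`, and `(A U + B U)ᴴ Z = ((1 + J₁) W)ᴴ (Zᴴ Z)`, which has the rank of `W` because both
`1 + J₁` and the Gram matrix `Zᴴ Z` are invertible.
-/

section Rank

variable {m n κ p R 𝕜 : Type*} [Fintype m] [Fintype n] [Fintype κ] [Fintype p]

theorem rank_mul_eq_right_of_mul_eq_one [DecidableEq κ] [CommSemiring R] [StrongRankCondition R]
    {L : Matrix κ n R} {X : Matrix n κ R} (hLX : L * X = 1) (W : Matrix κ p R) :
    (X * W).rank = W.rank := by
  refine (rank_mul_le_right X W).antisymm ?_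
  calc W.rank = (L * (X * W)).rank := by rw [← Matrix.mul_assoc, hLX, Matrix.one_mul]
    _ ≤ (X * W).rank := rank_mul_le_right L (X * W)

variable [Field 𝕜] [PartialOrder 𝕜] [StarRing 𝕜] [StarOrderedRing 𝕜]

theorem isUnit_conjTranspose_mul_self [DecidableEq κ] {Z : Matrix m κ 𝕜}
    (hZ : LinearIndependent 𝕜 Z.col) : IsUnit (Zᴴ * Z) :=
  (PosDef.conjTranspose_mul_self Z (mulVec_injective_iff.2 hZ)).isUnit

theorem rank_conjTranspose_mul_mul_self {Z : Matrix m κ 𝕜} (hZ : LinearIndependent 𝕜 Z.col)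
    (V : Matrix κ p 𝕜) : ((Z * V)ᴴ * Z).rank = V.rank := by
  classical
  have hdet : IsUnit (Zᴴ * Z).det := (isUnit_iff_isUnit_det _).1 (isUnit_conjTranspose_mul_self hZ)
  rw [conjTranspose_mul, Matrix.mul_assoc, rank_mul_eq_left_of_isUnit_det _ _ hdet,
    rank_conjTranspose]

end Rank

section BlockKrylov

variable {n κ p R : Type*} [Fintype n] [Fintype κ] [DecidableEq κ] [Semiring R]

/-- The block Krylov matrix `[V, J V, …, J ^ (g - 1) V]`. Its columns are indexed by pairs (power,
column of `V`), matching the indexing of the moment matrix `U`. -/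
def blockKrylov (J : Matrix κ κ R) (V : Matrix κ p R) (g : ℕ) : Matrix κ (Fin g × p) R :=
  of fun a q => (J ^ (q.1 : ℕ) * V) a q.2

theorem eq_mul_blockKrylov {X : Matrix n κ R} {J : Matrix κ κ R} {L : Matrix κ n R}
    {Y : Matrix n p R} {g : ℕ} {U : Matrix n (Fin g × p) R}
    (hU : ∀ i q, U i q = (X * J ^ (q.1 : ℕ) * L * Y) i q.2) :
    U = X * blockKrylov J (L * Y) g := by
  ext i q
  rw [hU, Matrix.mul_assoc, Matrix.mul_assoc]
  rfl

end BlockKrylov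

section SelectedColumns

variable {n κ ι R : Type*} [DecidableEq n]

theorem inv_submatrix_mul_submatrix [Fintype n] [DecidableEq κ] [CommRing R] {S : Matrix n n R}
    (hS : IsUnit S) {c : κ → n} (hc : Function.Injective c) :
    S⁻¹.submatrix c id * S.submatrix id c = 1 := by
  rw [← submatrix_mul S⁻¹ S c id c Function.bijective_id,
    nonsing_inv_mul S ((isUnit_iff_isUnit_det S).1 hS), submatrix_one c hc]

theorem linearIndependent_col_inv_submatrix [Fintype n] [CommRing R] {T : Matrix n n R}
    (hT : IsUnit T) {c : κ → n} (hc : Function.Injective c) :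
    LinearIndependent R (T⁻¹.submatrix id c).col :=
  (linearIndependent_cols_of_isUnit (isUnit_nonsing_inv_iff.2 hT)).comp c hc

/-- For injective `c`: `K` maps the span of the coordinate vectors selected by `c` into itself, and
acts on it as the matrix `P`. If `c` enumerates an initial segment in order, this says that `K` is
block upper triangular with leading diagonal block `P`. -/
def RestrictsTo [Fintype κ] [Semiring R] (K : Matrix n n R) (c : κ → n) (P : Matrix κ κ R) : Prop :=
  K.submatrix id c = (1 : Matrix n n R).submatrix id c * P

namespace RestrictsTo

variable [Fintype κ]

theorem one [DecidableEq κ] [Semiring R] (c : κ → n) : RestrictsTo (1 : Matrix n n R) c 1 :=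
  (Matrix.mul_one _).symm

theorem comp [DecidableEq κ] [Fintype ι] [Semiring R] {K : Matrix n n R} {P : Matrix κ κ R}
    {Q : Matrix ι ι R} {c : κ → n} {c' : ι → κ} (hK : RestrictsTo K c P) (hP : RestrictsTo P c' Q) :
    RestrictsTo K (c ∘ c') Q :=
  calc K.submatrix id (c ∘ c') = (1 : Matrix n n R).submatrix id c * P.submatrix id c' :=
        congrArg (fun M => M.submatrix id c') hK
    _ = (1 : Matrix n n R).submatrix id c * (1 : Matrix κ κ R).submatrix id c' * Q := by
        rw [hP, Matrix.mul_assoc]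
    _ = (1 : Matrix n n R).submatrix id (c ∘ c') * Q :=
        congrArg (· * Q) (mul_submatrix_one (.refl κ) c' _)

theorem fromBlocks_submatrix [Semiring R] (e : κ ⊕ ι ≃ n) (P : Matrix κ κ R)
    (Q : Matrix κ ι R) (D : Matrix ι ι R) :
    RestrictsTo ((fromBlocks P Q 0 D).submatrix e.symm e.symm) (e ∘ Sum.inl) P := by
  classical
  ext i j
  obtain ⟨x, rfl⟩ := e.surjective i
  cases x <;> simp [mul_apply, one_apply]

theorem mul_submatrix [Fintype n] [CommRing R] {A S T : Matrix n n R} {c : κ → n} {P : Matrix κ κ R}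
    (h : RestrictsTo (T * A * S) c P) (hT : IsUnit T) :
    A * S.submatrix id c = T⁻¹.submatrix id c * P := by
  have hdet : IsUnit T.det := (isUnit_iff_isUnit_det T).1 hT
  calc A * S.submatrix id c = (T⁻¹ * (T * A * S)).submatrix id c := by
        rw [Matrix.mul_assoc T, nonsing_inv_mul_cancel_left T (A * S) hdet]; rfl
    _ = T⁻¹ * (T * A * S).submatrix id c := rfl
    _ = T⁻¹ * (1 : Matrix n n R).submatrix id c * P := by rw [h, Matrix.mul_assoc]
    _ = T⁻¹.submatrix id c * P := congrArg (· * P) (mul_submatrix_one (.refl n) c T⁻¹)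

end RestrictsTo

end SelectedColumns

theorem finSumFinEquiv_trans_finCongr_comp_inl {a b : ℕ} (hab : a ≤ b) :
    finSumFinEquiv.trans (finCongr (Nat.add_sub_cancel' hab)) ∘ Sum.inl = Fin.castLE hab := by
  ext i
  simp

theorem restrictsTo_castLE {R : Type*} [Semiring R] {a b : ℕ} (hab : a ≤ b)
    (P : Matrix (Fin a) (Fin a) R) (Q : Matrix (Fin a) (Fin (b - a)) R)
    (D : Matrix (Fin (b - a)) (Fin (b - a)) R) :
    RestrictsTo ((fromBlocks P Q 0 D).submatrix
        (finSumFinEquiv.trans (finCongr (Nat.add_sub_cancel' hab))).symm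
        (finSumFinEquiv.trans (finCongr (Nat.add_sub_cancel' hab))).symm)
      (Fin.castLE hab) P :=
  finSumFinEquiv_trans_finCongr_comp_inl hab ▸ RestrictsTo.fromBlocks_submatrix _ P Q D

theorem rank_left_right_factors_general {m n κ p 𝕜 : Type*} [Fintype m] [Fintype n] [Fintype κ]
    [Fintype p] [DecidableEq κ] [Field 𝕜] [PartialOrder 𝕜] [StarRing 𝕜] [StarOrderedRing 𝕜]
    {A B : Matrix m n 𝕜} {X : Matrix n κ 𝕜} {Z : Matrix m κ 𝕜} {J : Matrix κ κ 𝕜}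
    {L : Matrix κ n 𝕜} {W : Matrix κ p 𝕜} {U : Matrix n p 𝕜}
    (hA : A * X = Z * J) (hB : B * X = Z) (hLX : L * X = 1) (hZ : LinearIndependent 𝕜 Z.col)
    (hJ : IsUnit (1 + J)) (hU : U = X * W) :
    ((A * U + B * U)ᴴ * Z).rank = U.rank ∧ (L * U).rank = U.rank := by
  have hWU : W.rank = U.rank := by rw [hU, rank_mul_eq_right_of_mul_eq_one hLX]
  have hLU : L * U = W := by rw [hU, ← Matrix.mul_assoc, hLX, Matrix.one_mul]
  have hABU : A * U + B * U = Z * ((1 + J) * W) := by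
    rw [hU, ← Matrix.mul_assoc A, ← Matrix.mul_assoc B, hA, hB, ← Matrix.add_mul,
      ← Matrix.mul_assoc, Matrix.mul_add, Matrix.mul_one, add_comm]
  refine ⟨?_, by rw [hLU, hWU]⟩
  rw [hABU, rank_conjTranspose_mul_mul_self hZ,
    rank_mul_eq_right_of_isUnit_det _ _ ((isUnit_iff_isUnit_det _).1 hJ), hWU]

/-- If `I_s + J₁` is invertible and `rank U = s`, then
`rank((A·U + B·U)*·(T⁻¹)_{(:,1:s)}) = s` and `rank((S⁻¹)_{(1:s,:)}·U) = s`. -/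
theorem rank_left_right_factors
    (n d s h g : ℕ) (hs : 0 < s) (hsd : s ≤ d) (hdn : d ≤ n) (hg : 1 ≤ g)
    (hhg : s ≤ h * g)
    (A B S T : Matrix (Fin n) (Fin n) ℂ) (hS : IsUnit S) (hT : IsUnit T)
    (J : Matrix (Fin d) (Fin d) ℂ) (hJtri : J.BlockTriangular (id : Fin d → Fin d))
    (N : Matrix (Fin (n - d)) (Fin (n - d)) ℂ) (hN : IsNilpotent N)
    (hA : T * A * S =
      (Matrix.fromBlocks J 0 0 (1 : Matrix (Fin (n - d)) (Fin (n - d)) ℂ)).submatrix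
        (finSumFinEquiv.trans (finCongr (Nat.add_sub_cancel' hdn))).symm
        (finSumFinEquiv.trans (finCongr (Nat.add_sub_cancel' hdn))).symm)
    (hB : T * B * S =
      (Matrix.fromBlocks (1 : Matrix (Fin d) (Fin d) ℂ) 0 0 N).submatrix
        (finSumFinEquiv.trans (finCongr (Nat.add_sub_cancel' hdn))).symm
        (finSumFinEquiv.trans (finCongr (Nat.add_sub_cancel' hdn))).symm)
    (J₁ : Matrix (Fin s) (Fin s) ℂ) (J₂ : Matrix (Fin (d - s)) (Fin (d - s)) ℂ)
    (hJ : J = (Matrix.fromBlocks J₁ 0 0 J₂).submatrix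
        (finSumFinEquiv.trans (finCongr (Nat.add_sub_cancel' hsd))).symm
        (finSumFinEquiv.trans (finCongr (Nat.add_sub_cancel' hsd))).symm)
    (F : ℕ → Matrix (Fin n) (Fin n) ℂ)
    (hF : ∀ k : ℕ, F k =
      S.submatrix id (Fin.castLE (hsd.trans hdn)) * (J₁ ^ k) *
        S⁻¹.submatrix (Fin.castLE (hsd.trans hdn)) id)
    (Y : Matrix (Fin n) (Fin h) ℂ)
    (U : Matrix (Fin n) (Fin g × Fin h) ℂ)
    (hU : ∀ (i : Fin n) (p : Fin g × Fin h), U i p = (F (p.1 : ℕ) * Y) i p.2)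
    (hinv : IsUnit ((1 : Matrix (Fin s) (Fin s) ℂ) + J₁))
    (hrankU : U.rank = s) :
    ((A * U + B * U)ᴴ * T⁻¹.submatrix id (Fin.castLE (hsd.trans hdn))).rank = s ∧
      (S⁻¹.submatrix (Fin.castLE (hsd.trans hdn)) id * U).rank = s := by
  let c : Fin s → Fin n := Fin.castLE (hsd.trans hdn)
  have hc : Function.Injective c := Fin.castLE_injective _
  have hJJ₁ : RestrictsTo J (Fin.castLE hsd) J₁ := hJ ▸ restrictsTo_castLE hsd J₁ 0 J₂
  have hTAS : RestrictsTo (T * A * S) c J₁ :=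
    hA ▸ RestrictsTo.comp (restrictsTo_castLE hdn J 0 1) hJJ₁
  have hTBS : RestrictsTo (T * B * S) c 1 :=
    hB ▸ RestrictsTo.comp (restrictsTo_castLE hdn 1 0 N) (.one (Fin.castLE hsd))
  have hfactor : U = S.submatrix id c * blockKrylov J₁ (S⁻¹.submatrix c id * Y) g :=
    eq_mul_blockKrylov fun i q => by rw [hU, hF]
  open scoped ComplexOrder in
  have hranks := rank_left_right_factors_general (hTAS.mul_submatrix hT)
    ((hTBS.mul_submatrix hT).trans (Matrix.mul_one _)) (inv_submatrix_mul_submatrix hS hc)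
    (linearIndependent_col_inv_submatrix hT hc) hinv hfactor
  exact hranks.imp (·.trans hrankU) (·.trans hrankU)
end

section
/- Under the Weierstrass setting, assume that I_s + J₁ is invertible and rank(U) = s. Set Â := (A·U + B·U)*·A·U and B̂ := (A·U + B·U)*·B·U, which are hg×hg matrices. Then for every z ∈ ℂ, rank(z·B̂ − Â) = rank(z·I_s − J₁); in particular rank(z·B̂ − Â) ≤ s for all z, and rank(z·B̂ − Â) < s if and only if z is a diagonal entry of J₁. -/
open Matrix

/-!
The columns `X` of `S` attached to `J₁` satisfy `A X = B X J₁`, and `B X` has full column rank `s`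
because `T B X` consists of unit vectors. Since `U = X W` with `W` of full row rank, writing
`C = B X` gives
`z B̂ - Â = (C (I + J₁) W)* C (z I - J₁) W = W* (I + J₁)* (C* C) (z I - J₁) W`,
and multiplying by a matrix of full column rank on the left, or of full row rank on the right,
preserves the rank. The factor `C* C` has full rank because `C` does.
-/

section FullRank

variable {m n r K : Type*} [Fintype n] [Fintype r] [Field K]

lemma rank_eq_card_iff_linearIndependent_col {P : Matrix m r K} :
    P.rank = Fintype.card r ↔ LinearIndependent K P.col := by
  rw [linearIndependent_iff_card_eq_finrank_span, rank_eq_finrank_span_cols, Set.finrank, eq_comm]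

lemma rank_mul_eq_right_of_rank_eq_card {P : Matrix m r K} (hP : P.rank = Fintype.card r)
    (M : Matrix r n K) : (P * M).rank = M.rank := by
  have hinj : Function.Injective P.mulVecLin :=
    mulVec_injective_iff.2 (rank_eq_card_iff_linearIndependent_col.1 hP)
  rw [rank, rank, mulVecLin_mul, LinearMap.range_comp]
  exact (Submodule.equivMapOfInjective _ hinj _).finrank_eq.symm

lemma rank_mul_eq_left_of_rank_eq_card {W : Matrix r n K} (hW : W.rank = Fintype.card r)
    (M : Matrix m r K) : (M * W).rank = M.rank := by
  have hrange : LinearMap.range W.mulVecLin = ⊤ :=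
    Submodule.eq_top_of_finrank_eq (hW.trans (Module.finrank_fintype_fun_eq_card K).symm)
  rw [rank, rank, mulVecLin_mul, LinearMap.range_comp_of_range_eq_top _ hrange]

lemma rank_lt_card_iff_det_eq_zero [DecidableEq r] {M : Matrix r r K} :
    M.rank < Fintype.card r ↔ M.det = 0 := by
  rw [M.rank_le_card_width.lt_iff_ne, Ne, rank_eq_card_iff_linearIndependent_col,
    linearIndependent_cols_iff_isUnit, isUnit_iff_isUnit_det, isUnit_iff_ne_zero, not_not]

lemma rank_smul_one_sub_lt_card_iff_exists_eq_diag [LinearOrder r] {J : Matrix r r K}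
    (hJ : J.IsUpperTriangular) (z : K) :
    (z • (1 : Matrix r r K) - J).rank < Fintype.card r ↔ ∃ i, z = J i i := by
  have htri : (z • (1 : Matrix r r K) - J).IsUpperTriangular := by
    rw [smul_one_eq_diagonal]
    exact (blockTriangular_diagonal _).sub hJ
  simp [rank_lt_card_iff_det_eq_zero, det_of_isUpperTriangular htri, Finset.prod_eq_zero_iff,
    sub_eq_zero]

lemma rank_one_submatrix_id_of_injective [DecidableEq m] {f : r → m} (hf : Function.Injective f) :
    ((1 : Matrix m m K).submatrix id f).rank = Fintype.card r := by
  have hcol : ((1 : Matrix m m K).submatrix id f).col = fun j => Pi.single (f j) 1 := by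
    ext j i
    simp [one_apply, Pi.single_apply]
  rw [rank_eq_card_iff_linearIndependent_col, hcol]
  exact (Pi.linearIndependent_single_one m K).comp f hf

lemma rank_conjTranspose_mul_of_rank_eq_card [Fintype m] [PartialOrder K] [StarRing K]
    [StarOrderedRing K] {C : Matrix m r K} {D : Matrix r r K} {W : Matrix r n K}
    (hC : C.rank = Fintype.card r) (hD : D.rank = Fintype.card r) (hW : W.rank = Fintype.card r)
    (M : Matrix r r K) : ((C * D * W)ᴴ * (C * M * W)).rank = M.rank := by
  calc ((C * D * W)ᴴ * (C * M * W)).rank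
      = (Wᴴ * (Dᴴ * ((Cᴴ * C) * (M * W)))).rank := by
        simp only [conjTranspose_mul, Matrix.mul_assoc]
    _ = (Dᴴ * ((Cᴴ * C) * (M * W))).rank :=
        rank_mul_eq_right_of_rank_eq_card ((rank_conjTranspose W).trans hW) _
    _ = ((Cᴴ * C) * (M * W)).rank :=
        rank_mul_eq_right_of_rank_eq_card ((rank_conjTranspose D).trans hD) _
    _ = (M * W).rank :=
        rank_mul_eq_right_of_rank_eq_card ((rank_conjTranspose_mul_self C).trans hC) _
    _ = M.rank := rank_mul_eq_left_of_rank_eq_card hW M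

end FullRank

section WeierstrassForm

variable {n d r k l K : Type*} (e₁ : r ⊕ k ≃ d) (e₂ : d ⊕ l ≃ n)

/-- The columns of `S` in the leading block `r` of the nested splitting `n ≃ d ⊕ l`,
`d ≃ r ⊕ k`: the matrix `S_{(:,1:s)}`, whose columns span the deflating subspace of the
eigenvalues of `J₁`. -/
def leadingColumns (S : Matrix n n K) : Matrix n r K :=
  S.submatrix id (e₂ ∘ Sum.inl ∘ e₁ ∘ Sum.inl)

lemma leadingColumns_mul [Fintype n] [Mul K] [AddCommMonoid K] (M S : Matrix n n K) :
    leadingColumns e₁ e₂ (M * S) = M * leadingColumns e₁ e₂ S :=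
  rfl

lemma leadingColumns_fromBlocks_fromBlocks [Fintype r] [DecidableEq n] [NonAssocSemiring K]
    (J₁ : Matrix r r K) (J₂ : Matrix k k K) (Q : Matrix l l K) :
    leadingColumns e₁ e₂
        ((fromBlocks ((fromBlocks J₁ 0 0 J₂).submatrix e₁.symm e₁.symm) 0 0 Q).submatrix
          e₂.symm e₂.symm) =
      leadingColumns e₁ e₂ (1 : Matrix n n K) * J₁ := by
  classical
  ext i j
  rw [mul_apply]
  obtain ⟨i | i, rfl⟩ := e₂.surjective i
  · obtain ⟨i | i, rfl⟩ := e₁.surjective i <;> simp [leadingColumns, one_apply]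
  · simp [leadingColumns, one_apply]

lemma leadingColumns_fromBlocks_one [DecidableEq n] [DecidableEq d] [Zero K] [One K]
    (N : Matrix l l K) :
    leadingColumns e₁ e₂ ((fromBlocks 1 0 0 N).submatrix e₂.symm e₂.symm) =
      leadingColumns e₁ e₂ (1 : Matrix n n K) := by
  ext i j
  obtain ⟨i | i, rfl⟩ := e₂.surjective i <;> simp [leadingColumns, one_apply]

lemma mul_leadingColumns_eq_mul_mul [Fintype n] [Fintype r] [DecidableEq n] [DecidableEq d]
    [Semiring K] {A B S T : Matrix n n K} (hT : IsUnit T) {J : Matrix d d K} {Q N : Matrix l l K}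
    {J₁ : Matrix r r K} {J₂ : Matrix k k K}
    (hA : T * A * S = (fromBlocks J 0 0 Q).submatrix e₂.symm e₂.symm)
    (hB : T * B * S = (fromBlocks 1 0 0 N).submatrix e₂.symm e₂.symm)
    (hJ : J = (fromBlocks J₁ 0 0 J₂).submatrix e₁.symm e₁.symm) :
    A * leadingColumns e₁ e₂ S = B * leadingColumns e₁ e₂ S * J₁ := by
  obtain ⟨T', hT'⟩ := hT.exists_left_inv
  have hcancel : Function.LeftInverse (fun M : Matrix n r K => T' * M) (T * ·) := fun M => by
    simp only [← Matrix.mul_assoc, hT', Matrix.one_mul]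
  apply hcancel.injective
  calc T * (A * leadingColumns e₁ e₂ S)
      = leadingColumns e₁ e₂ (T * A * S) := by rw [leadingColumns_mul, Matrix.mul_assoc]
    _ = leadingColumns e₁ e₂ (1 : Matrix n n K) * J₁ := by
        rw [hA, hJ, leadingColumns_fromBlocks_fromBlocks]
    _ = leadingColumns e₁ e₂ (T * B * S) * J₁ := by rw [hB, leadingColumns_fromBlocks_one]
    _ = T * (B * leadingColumns e₁ e₂ S * J₁) := by
        rw [leadingColumns_mul, Matrix.mul_assoc, Matrix.mul_assoc, Matrix.mul_assoc]

lemma rank_mul_leadingColumns [Fintype n] [Fintype r] [DecidableEq d] [Field K]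
    {B S T : Matrix n n K} {N : Matrix l l K}
    (hB : T * B * S = (fromBlocks 1 0 0 N).submatrix e₂.symm e₂.symm) :
    (B * leadingColumns e₁ e₂ S).rank = Fintype.card r := by
  classical
  have hinj : Function.Injective (e₂ ∘ Sum.inl ∘ e₁ ∘ Sum.inl) :=
    e₂.injective.comp (Sum.inl_injective.comp (e₁.injective.comp Sum.inl_injective))
  refine le_antisymm (rank_le_card_width _) ?_
  calc Fintype.card r
      = (leadingColumns e₁ e₂ (1 : Matrix n n K)).rank :=
        (rank_one_submatrix_id_of_injective hinj).symm
    _ = (T * (B * leadingColumns e₁ e₂ S)).rank := by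
        rw [← leadingColumns_fromBlocks_one e₁ e₂ N, ← hB, leadingColumns_mul, Matrix.mul_assoc]
    _ ≤ (B * leadingColumns e₁ e₂ S).rank := rank_mul_le_right _ _

lemma isUpperTriangular_of_fromBlocks_submatrix [LT r] [LT d] [Zero K] {J : Matrix d d K}
    {J₁ : Matrix r r K} {J₂ : Matrix k k K}
    (he₁ : ∀ ⦃i j⦄, i < j → e₁ (Sum.inl i) < e₁ (Sum.inl j))
    (hJ : J = (fromBlocks J₁ 0 0 J₂).submatrix e₁.symm e₁.symm) (hJtri : J.IsUpperTriangular) :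
    J₁.IsUpperTriangular := fun i j hij => by
  simpa [hJ] using hJtri (he₁ hij)

end WeierstrassForm

theorem rank_oblique_projected_pencil_general {m n r p K : Type*} [Fintype m] [Fintype n]
    [Fintype r] [LinearOrder r] [Fintype p] [Field K] [PartialOrder K] [StarRing K]
    [StarOrderedRing K] {A B : Matrix m n K} {X : Matrix n r K} {J : Matrix r r K}
    (hX : A * X = B * X * J) (hBX : (B * X).rank = Fintype.card r) (hJ : J.IsUpperTriangular)
    (hinv : IsUnit (1 + J)) {U : Matrix n p K} {W : Matrix r p K} (hU : U = X * W)
    (hrankU : U.rank = Fintype.card r) (z : K) :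
    (z • ((A * U + B * U)ᴴ * (B * U)) - (A * U + B * U)ᴴ * (A * U)).rank =
        (z • (1 : Matrix r r K) - J).rank ∧
      (z • ((A * U + B * U)ᴴ * (B * U)) - (A * U + B * U)ᴴ * (A * U)).rank ≤ Fintype.card r ∧
      ((z • ((A * U + B * U)ᴴ * (B * U)) - (A * U + B * U)ᴴ * (A * U)).rank < Fintype.card r ↔
        ∃ i, z = J i i) := by
  have hW : W.rank = Fintype.card r := by
    refine le_antisymm W.rank_le_card_height ?_
    rw [← hrankU, hU]
    exact rank_mul_le_right X W
  have hBU : B * U = B * X * W := by rw [hU, Matrix.mul_assoc]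
  have hAU : A * U = B * X * J * W := by rw [hU, ← hX, Matrix.mul_assoc]
  have hsum : A * U + B * U = B * X * (1 + J) * W := by
    rw [hAU, hBU, Matrix.mul_add, Matrix.add_mul, Matrix.mul_one, add_comm]
  have hdiff : z • (B * U) - A * U = B * X * (z • 1 - J) * W := by
    rw [hAU, hBU, Matrix.mul_sub, Matrix.sub_mul, Matrix.mul_smul, Matrix.mul_one,
      Matrix.smul_mul]
  have hrank : (z • ((A * U + B * U)ᴴ * (B * U)) - (A * U + B * U)ᴴ * (A * U)).rank =
      (z • (1 : Matrix r r K) - J).rank := by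
    rw [← Matrix.mul_smul, ← Matrix.mul_sub, hsum, hdiff]
    exact rank_conjTranspose_mul_of_rank_eq_card hBX (rank_of_isUnit _ hinv) hW _
  rw [hrank]
  exact ⟨rfl, rank_le_card_width _, rank_smul_one_sub_lt_card_iff_exists_eq_diag hJ z⟩

/-- With `Â = (AU+BU)*·A·U` and `B̂ = (AU+BU)*·B·U`, for every `z`,
`rank(z·B̂ − Â) = rank(z·I_s − J₁)`; in particular the rank is at most `s` and drops
below `s` exactly at the diagonal entries of `J₁`. -/
theorem rank_oblique_projected_pencil
    (n d s h g : ℕ) (hs : 0 < s) (hsd : s ≤ d) (hdn : d ≤ n) (hg : 1 ≤ g)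
    (hhg : s ≤ h * g)
    (A B S T : Matrix (Fin n) (Fin n) ℂ) (hS : IsUnit S) (hT : IsUnit T)
    (J : Matrix (Fin d) (Fin d) ℂ) (hJtri : J.BlockTriangular (id : Fin d → Fin d))
    (N : Matrix (Fin (n - d)) (Fin (n - d)) ℂ) (hN : IsNilpotent N)
    (hA : T * A * S =
      (Matrix.fromBlocks J 0 0 (1 : Matrix (Fin (n - d)) (Fin (n - d)) ℂ)).submatrix
        (finSumFinEquiv.trans (finCongr (Nat.add_sub_cancel' hdn))).symm
        (finSumFinEquiv.trans (finCongr (Nat.add_sub_cancel' hdn))).symm)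
    (hB : T * B * S =
      (Matrix.fromBlocks (1 : Matrix (Fin d) (Fin d) ℂ) 0 0 N).submatrix
        (finSumFinEquiv.trans (finCongr (Nat.add_sub_cancel' hdn))).symm
        (finSumFinEquiv.trans (finCongr (Nat.add_sub_cancel' hdn))).symm)
    (J₁ : Matrix (Fin s) (Fin s) ℂ) (J₂ : Matrix (Fin (d - s)) (Fin (d - s)) ℂ)
    (hJ : J = (Matrix.fromBlocks J₁ 0 0 J₂).submatrix
        (finSumFinEquiv.trans (finCongr (Nat.add_sub_cancel' hsd))).symm
        (finSumFinEquiv.trans (finCongr (Nat.add_sub_cancel' hsd))).symm)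
    (F : ℕ → Matrix (Fin n) (Fin n) ℂ)
    (hF : ∀ k : ℕ, F k =
      S.submatrix id (Fin.castLE (hsd.trans hdn)) * (J₁ ^ k) *
        S⁻¹.submatrix (Fin.castLE (hsd.trans hdn)) id)
    (Y : Matrix (Fin n) (Fin h) ℂ)
    (U : Matrix (Fin n) (Fin g × Fin h) ℂ)
    (hU : ∀ (i : Fin n) (p : Fin g × Fin h), U i p = (F (p.1 : ℕ) * Y) i p.2)
    (hinv : IsUnit ((1 : Matrix (Fin s) (Fin s) ℂ) + J₁))
    (hrankU : U.rank = s)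
    (Ahat Bhat : Matrix (Fin g × Fin h) (Fin g × Fin h) ℂ)
    (hAhat : Ahat = (A * U + B * U)ᴴ * (A * U))
    (hBhat : Bhat = (A * U + B * U)ᴴ * (B * U)) :
    ∀ z : ℂ,
      (z • Bhat - Ahat).rank = (z • (1 : Matrix (Fin s) (Fin s) ℂ) - J₁).rank ∧
      (z • Bhat - Ahat).rank ≤ s ∧
      ((z • Bhat - Ahat).rank < s ↔ ∃ i : Fin s, z = J₁ i i) := by
  intro z
  let e₁ := finSumFinEquiv.trans (finCongr (Nat.add_sub_cancel' hsd))
  let e₂ := finSumFinEquiv.trans (finCongr (Nat.add_sub_cancel' hdn))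
  have hUW : U = leadingColumns e₁ e₂ S * of fun i (p : Fin g × Fin h) =>
      (J₁ ^ (p.1 : ℕ) * S⁻¹.submatrix (Fin.castLE (hsd.trans hdn)) id * Y) i p.2 := by
    ext i p
    simp only [hU, hF, Matrix.mul_assoc]
    rfl
  have hJ₁tri : J₁.IsUpperTriangular :=
    isUpperTriangular_of_fromBlocks_submatrix e₁ (Fin.strictMono_castLE hsd) hJ hJtri
  open scoped ComplexOrder in
  simpa only [hAhat, hBhat, Fintype.card_fin] using
    rank_oblique_projected_pencil_general (mul_leadingColumns_eq_mul_mul e₁ e₂ hT hA hB hJ)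
      (rank_mul_leadingColumns e₁ e₂ hB) hJ₁tri hinv hUW
      (hrankU.trans (Fintype.card_fin s).symm) z
end

section
/- Under the Weierstrass setting, assume that I_s + J₁ is invertible and rank(U) = s. Let V, W ∈ ℂ^{n×s} be matrices whose column spaces equal the column space of U and of A·U + B·U, respectively. If y ∈ ℂ^s is nonzero and μ ∈ ℂ satisfies (W*·A·V)·y = μ·(W*·B·V)·y, then V·y ≠ 0, A·(V·y) = μ·B·(V·y), and μ is a diagonal entry of J₁ (i.e., an eigenvalue of the pencil zB − A inside Γ). -/
open Matrix

/-!
The first `s` columns `X` of `S` satisfy `A * X = B * X * J₁`, and the columns of `B * X` are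
independent. The rank condition makes `X`, `U` and `V` span the same space, and since `1 + J₁` is
invertible, `A * X + B * X = B * X * (1 + J₁)` shows that `W` spans the column space of `B * X`. If
`V *ᵥ y = X *ᵥ x`, the residual `A *ᵥ (V *ᵥ y) - μ • B *ᵥ (V *ᵥ y)` is
`(B * X) *ᵥ (J₁ *ᵥ x - μ • x)`, so it lies in the column space of `W`. The Galerkin condition makes
it orthogonal to that space, so it vanishes, and independence of the columns of `B * X` leaves
`J₁ *ᵥ x = μ • x`.
-/

section ColumnSpace

variable {R K l m k p ι κ : Type*} [Fintype k] [Fintype p]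

theorem mulVec_injective_submatrix [CommRing R] {M : Matrix m k R}
    (hM : Function.Injective M.mulVec) {f : p → k} (hf : Function.Injective f) :
    Function.Injective (M.submatrix id f).mulVec := by
  rw [mulVec_injective_iff] at hM ⊢
  exact hM.comp f hf

theorem range_mulVecLin_mul [CommSemiring R] [Fintype m] (M : Matrix l m R) (N : Matrix m k R) :
    LinearMap.range (M * N).mulVecLin = (LinearMap.range N.mulVecLin).map M.mulVecLin := by
  rw [mulVecLin_mul, LinearMap.range_comp]

theorem range_mulVecLin_mul_of_isUnit [CommRing R] [DecidableEq k] (M : Matrix m k R)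
    {N : Matrix k k R} (hN : IsUnit N) :
    LinearMap.range (M * N).mulVecLin = LinearMap.range M.mulVecLin := by
  rw [mulVecLin_mul, LinearMap.range_comp_of_range_eq_top]
  exact LinearMap.range_eq_top.2 (mulVec_surjective_iff_isUnit.2 hN)

theorem range_mulVecLin_le_of_forall_apply_eq [CommSemiring R] [Fintype ι] [Fintype κ]
    {U : Matrix m (ι × κ) R} {X : Matrix m k R} (C : ι → Matrix k κ R)
    (hU : ∀ i q, U i q = (X * C q.1) i q.2) :
    LinearMap.range U.mulVecLin ≤ LinearMap.range X.mulVecLin := by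
  have hUX : U = X * of fun i q => C q.1 i q.2 := by
    ext i q
    simp only [hU, mul_apply, of_apply]
  rw [hUX, mulVecLin_mul]
  exact LinearMap.range_comp_le_range _ _

theorem mulVec_injective_of_rank_eq_card [Field K] {M : Matrix m k K}
    (hM : M.rank = Fintype.card k) : Function.Injective M.mulVec := by
  rw [mulVec_injective_iff, linearIndependent_iff_card_eq_finrank_span, ← hM,
    rank_eq_finrank_span_cols, Set.finrank]

theorem range_mulVecLin_eq_of_le_of_rank_eq_card [Finite m] [Field K] {U : Matrix m p K}
    {X : Matrix m k K} (hUX : LinearMap.range U.mulVecLin ≤ LinearMap.range X.mulVecLin)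
    (hU : U.rank = Fintype.card k) :
    LinearMap.range U.mulVecLin = LinearMap.range X.mulVecLin :=
  Submodule.eq_of_le_of_finrank_le hUX (X.rank_le_card_width.trans hU.ge)

theorem eq_zero_of_mem_range_of_conjTranspose_mulVec_eq_zero [Fintype m] [Field K] [PartialOrder K]
    [StarRing K] [StarOrderedRing K] {W : Matrix m k K} {v : m → K}
    (hv : v ∈ LinearMap.range W.mulVecLin) (hWv : Wᴴ *ᵥ v = 0) : v = 0 := by
  obtain ⟨z, rfl⟩ := hv
  rw [mulVecLin_apply, mulVec_mulVec] at hWv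
  exact (conjTranspose_mul_self_mulVec_eq_zero W z).1 hWv

end ColumnSpace

theorem fromBlocks_submatrix_symm_submatrix_inl {R m k r : Type*} [Semiring R] [Fintype k]
    [DecidableEq m] (e : k ⊕ r ≃ m) (P : Matrix k k R) (C : Matrix k r R) (Q : Matrix r r R) :
    ((fromBlocks P C 0 Q).submatrix e.symm e.symm).submatrix id (e ∘ Sum.inl) =
      (1 : Matrix m m R).submatrix id (e ∘ Sum.inl) * P := by
  classical
  ext i j
  obtain ⟨i | i, rfl⟩ := e.surjective i <;> simp [mul_apply, one_apply]

theorem blockTriangular_id_of_fromBlocks_submatrix_symm {R p k r : Type*} [Zero R] [Preorder k]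
    [Preorder p] (e : k ⊕ r ≃ p) (he : StrictMono (e ∘ Sum.inl)) {P : Matrix k k R}
    {C : Matrix k r R} {D : Matrix r k R} {Q : Matrix r r R}
    (h : ((fromBlocks P C D Q).submatrix e.symm e.symm).BlockTriangular id) :
    P.BlockTriangular id := by
  intro i j hij
  simpa using h (he hij)

theorem exists_eq_diag_of_hasEigenvalue_toLin' {K k : Type*} [Field K] [Fintype k] [LinearOrder k]
    {M : Matrix k k K} (hM : M.BlockTriangular id) {μ : K}
    (hμ : Module.End.HasEigenvalue (toLin' M) μ) : ∃ i, μ = M i i := by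
  rw [Module.End.hasEigenvalue_iff_isRoot_charpoly, charpoly_toLin',
    charpoly_of_isUpperTriangular M hM, Polynomial.isRoot_prod] at hμ
  simpa [sub_eq_zero] using hμ

/-- `(X, L)` is a deflating pair of the pencil `z * B - A`: the columns of `X` are a basis of a
subspace on which the pencil acts as `z - L`. Independence is asked of the columns of `B * X`, not
just of `X`, which excludes the infinite eigenvalues of the pencil. -/
structure IsDeflatingPair {R l m k : Type*} [CommRing R] [Fintype m] [Fintype k]
    (A B : Matrix l m R) (X : Matrix m k R) (L : Matrix k k R) : Prop where
  mul_eq : A * X = B * X * L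
  mulVec_injective : Function.Injective (B * X).mulVec

namespace IsDeflatingPair

variable {R l m k p r : Type*} [CommRing R] [Fintype m] [Fintype k] [Fintype p]

theorem of_mul_mul_eq_fromBlocks [DecidableEq m] [DecidableEq k]
    {A B S T : Matrix m m R} (hT : IsUnit T) (e : k ⊕ r ≃ m)
    {J : Matrix k k R} {A₁₂ B₁₂ : Matrix k r R} {A₂₂ B₂₂ : Matrix r r R}
    (hA : T * A * S = (fromBlocks J A₁₂ 0 A₂₂).submatrix e.symm e.symm)
    (hB : T * B * S = (fromBlocks 1 B₁₂ 0 B₂₂).submatrix e.symm e.symm) :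
    IsDeflatingPair A B (S.submatrix id (e ∘ Sum.inl)) J := by
  set X := S.submatrix id (e ∘ Sum.inl)
  set E := (1 : Matrix m m R).submatrix id (e ∘ Sum.inl)
  have hTA : T * (A * X) = E * J := by
    rw [← fromBlocks_submatrix_symm_submatrix_inl e J A₁₂ A₂₂, ← hA, ← Matrix.mul_assoc]
    rfl
  have hTB : T * (B * X) = E := by
    rw [← Matrix.mul_one E, ← fromBlocks_submatrix_symm_submatrix_inl e 1 B₁₂ B₂₂, ← hB,
      ← Matrix.mul_assoc]
    rfl
  have hE : Function.Injective E.mulVec :=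
    mulVec_injective_submatrix (fun v w h => by simpa using h) (e.injective.comp Sum.inl_injective)
  constructor
  · have : Invertible T := hT.invertible
    rw [← Matrix.mul_right_inj_of_invertible T, hTA, ← Matrix.mul_assoc, hTB]
  · refine Function.Injective.of_comp (f := T.mulVec) ?_
    simpa only [Function.comp_def, mulVec_mulVec, hTB] using hE

theorem submatrix_inl {A B : Matrix l m R} {X : Matrix m p R} {L : Matrix p p R}
    (hX : IsDeflatingPair A B X L) (e : k ⊕ r ≃ p) {L₁ : Matrix k k R} {C : Matrix k r R}
    {L₂ : Matrix r r R} (hL : L = (fromBlocks L₁ C 0 L₂).submatrix e.symm e.symm) :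
    IsDeflatingPair A B (X.submatrix id (e ∘ Sum.inl)) L₁ := by
  classical
  constructor
  · calc
      A * X.submatrix id (e ∘ Sum.inl) = (A * X).submatrix id (e ∘ Sum.inl) := rfl
      _ = B * X * L.submatrix id (e ∘ Sum.inl) := by rw [hX.mul_eq]; rfl
      _ = B * (X * (1 : Matrix p p R).submatrix (Equiv.refl p) (e ∘ Sum.inl)) * L₁ := by
        rw [hL, fromBlocks_submatrix_symm_submatrix_inl]
        simp only [Matrix.mul_assoc, Equiv.coe_refl]
      _ = B * X.submatrix id (e ∘ Sum.inl) * L₁ := by rw [mul_submatrix_one]; rfl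
  · exact mulVec_injective_submatrix hX.mulVec_injective (e.injective.comp Sum.inl_injective)

variable {A B : Matrix l m R} {X : Matrix m k R} {L : Matrix k k R}

theorem add_mul_eq [DecidableEq k] (hX : IsDeflatingPair A B X L) :
    (A + B) * X = B * X * (1 + L) := by
  rw [Matrix.add_mul, hX.mul_eq, Matrix.mul_add, Matrix.mul_one, add_comm]

theorem range_add_mul [DecidableEq k] (hX : IsDeflatingPair A B X L) (hL : IsUnit (1 + L)) :
    LinearMap.range ((A + B) * X).mulVecLin = LinearMap.range (B * X).mulVecLin := by
  rw [hX.add_mul_eq, range_mulVecLin_mul_of_isUnit _ hL]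

theorem mulVec_sub_smul_mulVec (hX : IsDeflatingPair A B X L) (μ : R) (x : k → R) :
    A *ᵥ (X *ᵥ x) - μ • B *ᵥ (X *ᵥ x) = (B * X) *ᵥ (L *ᵥ x - μ • x) := by
  rw [mulVec_sub, mulVec_smul, mulVec_mulVec, mulVec_mulVec, mulVec_mulVec, hX.mul_eq]

theorem mulVec_eq_smul_mulVec_iff (hX : IsDeflatingPair A B X L) {μ : R} {x : k → R} :
    A *ᵥ (X *ᵥ x) = μ • B *ᵥ (X *ᵥ x) ↔ L *ᵥ x = μ • x := by
  rw [← sub_eq_zero, hX.mulVec_sub_smul_mulVec, ← sub_eq_zero (a := L *ᵥ x)]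
  exact hX.mulVec_injective.eq_iff' (mulVec_zero _)

end IsDeflatingPair

theorem ritz_pairs_are_eigenpairs_general {K l m k p w : Type*} [Field K] [PartialOrder K]
    [StarRing K] [StarOrderedRing K] [Fintype l] [Fintype m] [Fintype k] [DecidableEq k]
    [Fintype p] [Fintype w] {A B : Matrix l m K} {X : Matrix m k K} {L : Matrix k k K}
    (hX : IsDeflatingPair A B X L) (hL : IsUnit (1 + L))
    {U : Matrix m p K} (hUX : LinearMap.range U.mulVecLin ≤ LinearMap.range X.mulVecLin)
    (hrankU : U.rank = Fintype.card k)
    {V : Matrix m k K} (hV : LinearMap.range V.mulVecLin = LinearMap.range U.mulVecLin)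
    {W : Matrix l w K}
    (hW : LinearMap.range W.mulVecLin = LinearMap.range (A * U + B * U).mulVecLin)
    {y : k → K} (hy : y ≠ 0) {μ : K} (heig : (Wᴴ * A * V) *ᵥ y = μ • (Wᴴ * B * V) *ᵥ y) :
    V *ᵥ y ≠ 0 ∧ A *ᵥ (V *ᵥ y) = μ • B *ᵥ (V *ᵥ y) ∧ Module.End.HasEigenvalue (toLin' L) μ := by
  have hU : LinearMap.range U.mulVecLin = LinearMap.range X.mulVecLin :=
    range_mulVecLin_eq_of_le_of_rank_eq_card hUX hrankU
  have hVy : V *ᵥ y ≠ 0 := by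
    have hV_inj : Function.Injective V.mulVec :=
      mulVec_injective_of_rank_eq_card (by rw [← hrankU, rank, rank, hV])
    exact (hV_inj.ne hy).trans_eq (mulVec_zero V)
  have hW_range : LinearMap.range W.mulVecLin = LinearMap.range (B * X).mulVecLin := by
    rw [hW, ← Matrix.add_mul, range_mulVecLin_mul, hU, ← range_mulVecLin_mul, hX.range_add_mul hL]
  obtain ⟨x, hx : X *ᵥ x = V *ᵥ y⟩ : V *ᵥ y ∈ LinearMap.range X.mulVecLin :=
    hU ▸ hV ▸ LinearMap.mem_range_self V.mulVecLin y
  have hVy_eig : A *ᵥ (V *ᵥ y) = μ • B *ᵥ (V *ᵥ y) := by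
    refine sub_eq_zero.1 (eq_zero_of_mem_range_of_conjTranspose_mulVec_eq_zero (W := W) ?_ ?_)
    · rw [hW_range, ← hx, hX.mulVec_sub_smul_mulVec]
      exact LinearMap.mem_range_self (B * X).mulVecLin _
    · simpa only [mulVec_sub, mulVec_smul, mulVec_mulVec, Matrix.mul_assoc, sub_eq_zero] using heig
  have hx_eig : L *ᵥ x = μ • x := hX.mulVec_eq_smul_mulVec_iff.1 (by rwa [hx])
  have hx_ne : x ≠ 0 := by
    rintro rfl
    exact hVy (by rw [← hx, mulVec_zero])
  exact ⟨hVy, hVy_eig, Module.End.hasEigenvalue_of_hasEigenvector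
    (Module.End.hasEigenvector_iff.2 ⟨Module.End.mem_eigenspace_iff.2 hx_eig, hx_ne⟩)⟩

/-- If the columns of `V` span `span{U}` and those of `W` span
`span{A·U + B·U}`, and `(W*·A·V)·y = μ·(W*·B·V)·y` with `y ≠ 0`, then `V·y ≠ 0`,
`A·(V·y) = μ·B·(V·y)`, and `μ` is a diagonal entry of `J₁`. -/
theorem ritz_pairs_are_eigenpairs
    (n d s h g : ℕ) (hs : 0 < s) (hsd : s ≤ d) (hdn : d ≤ n) (hg : 1 ≤ g)
    (hhg : s ≤ h * g)
    (A B S T : Matrix (Fin n) (Fin n) ℂ) (hS : IsUnit S) (hT : IsUnit T)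
    (J : Matrix (Fin d) (Fin d) ℂ) (hJtri : J.BlockTriangular (id : Fin d → Fin d))
    (N : Matrix (Fin (n - d)) (Fin (n - d)) ℂ) (hN : IsNilpotent N)
    (hA : T * A * S =
      (Matrix.fromBlocks J 0 0 (1 : Matrix (Fin (n - d)) (Fin (n - d)) ℂ)).submatrix
        (finSumFinEquiv.trans (finCongr (Nat.add_sub_cancel' hdn))).symm
        (finSumFinEquiv.trans (finCongr (Nat.add_sub_cancel' hdn))).symm)
    (hB : T * B * S =
      (Matrix.fromBlocks (1 : Matrix (Fin d) (Fin d) ℂ) 0 0 N).submatrix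
        (finSumFinEquiv.trans (finCongr (Nat.add_sub_cancel' hdn))).symm
        (finSumFinEquiv.trans (finCongr (Nat.add_sub_cancel' hdn))).symm)
    (J₁ : Matrix (Fin s) (Fin s) ℂ) (J₂ : Matrix (Fin (d - s)) (Fin (d - s)) ℂ)
    (hJ : J = (Matrix.fromBlocks J₁ 0 0 J₂).submatrix
        (finSumFinEquiv.trans (finCongr (Nat.add_sub_cancel' hsd))).symm
        (finSumFinEquiv.trans (finCongr (Nat.add_sub_cancel' hsd))).symm)
    (F : ℕ → Matrix (Fin n) (Fin n) ℂ)
    (hF : ∀ k : ℕ, F k =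
      S.submatrix id (Fin.castLE (hsd.trans hdn)) * (J₁ ^ k) *
        S⁻¹.submatrix (Fin.castLE (hsd.trans hdn)) id)
    (Y : Matrix (Fin n) (Fin h) ℂ)
    (U : Matrix (Fin n) (Fin g × Fin h) ℂ)
    (hU : ∀ (i : Fin n) (p : Fin g × Fin h), U i p = (F (p.1 : ℕ) * Y) i p.2)
    (hinv : IsUnit ((1 : Matrix (Fin s) (Fin s) ℂ) + J₁))
    (hrankU : U.rank = s)
    (V W : Matrix (Fin n) (Fin s) ℂ)
    (hV : LinearMap.range V.mulVecLin = LinearMap.range U.mulVecLin)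
    (hW : LinearMap.range W.mulVecLin = LinearMap.range (A * U + B * U).mulVecLin)
    (y : Fin s → ℂ) (hy : y ≠ 0) (μ : ℂ)
    (heig : (Wᴴ * A * V).mulVec y = μ • (Wᴴ * B * V).mulVec y) :
    V.mulVec y ≠ 0 ∧
      A.mulVec (V.mulVec y) = μ • B.mulVec (V.mulVec y) ∧
      ∃ i : Fin s, μ = J₁ i i := by
  have hX : IsDeflatingPair A B (S.submatrix id (Fin.castLE (hsd.trans hdn))) J₁ :=
    (IsDeflatingPair.of_mul_mul_eq_fromBlocks hT _ hA hB).submatrix_inl _ hJ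
  have hUX : LinearMap.range U.mulVecLin ≤
      LinearMap.range (S.submatrix id (Fin.castLE (hsd.trans hdn))).mulVecLin :=
    range_mulVecLin_le_of_forall_apply_eq
      (fun j => J₁ ^ (j : ℕ) * (S⁻¹.submatrix (Fin.castLE (hsd.trans hdn)) id * Y))
      fun i q => by rw [hU, hF, Matrix.mul_assoc, Matrix.mul_assoc]
  have hJ₁ : J₁.BlockTriangular id :=
    blockTriangular_id_of_fromBlocks_submatrix_symm _ (fun _ _ hij => hij) (hJ ▸ hJtri)
  open scoped ComplexOrder in
  obtain ⟨hVy, hVy_eig, hμ⟩ :=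
    ritz_pairs_are_eigenpairs_general hX hinv hUX (by simpa using hrankU) hV hW hy heig
  exact ⟨hVy, hVy_eig, exists_eq_diag_of_hasEigenvalue_toLin' hJ₁ hμ⟩
end
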